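/- Let Γ_A = (A, α) and Γ_B = (B, β) be non-negative cooperative games on disjoint finite player sets and let i ∈ A. Suppose that α({i}) = 0, that β({l}) = 0 for every l ∈ B, and that β(B) > 0. Then every element z of the core C(Γ_A ∘_i Γ_B) of the composite game decomposes as z = x ⊗_i y with x ∈ C(Γ_A) and y ∈ I(Γ_B). -/

import Mathlib

open Finset

/-- The discrete derivative of a coalition function `v` at player `i`. -/
noncomputable def gameDeriv {ι : Type*} [DecidableEq ι]
    (v : Finset ι → ℝ) (i : ι) (S : Finset ι) : ℝ :=
  v (insert i S) - v (S.erase i)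

/-- The coalition function of the partial composition `Γ_A ∘ᵢ Γ_B`. -/
noncomputable def gameComp {ι : Type*} [DecidableEq ι]
    (A B : Finset ι) (i : ι) (α β : Finset ι → ℝ) (S : Finset ι) : ℝ :=
  β B * α (S ∩ A) + gameDeriv α i (S ∩ A) * β (S ∩ B)

/-- `x` is an imputation of the game `(N, v)`. -/
def IsImputation {ι : Type*} (N : Finset ι) (v : Finset ι → ℝ) (x : ι → ℝ) : Prop :=
  (∑ j ∈ N, x j) = v N ∧ ∀ j ∈ N, v {j} ≤ x j

/-- `x` lies in the core of the game `(N, v)`. -/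
def InCore {ι : Type*} (N : Finset ι) (v : Finset ι → ℝ) (x : ι → ℝ) : Prop :=
  (∑ j ∈ N, x j) = v N ∧ ∀ S ⊆ N, v S ≤ ∑ j ∈ S, x j

/-- The partial tensor product of `x ∈ ℝ^A` and `y ∈ ℝ^B` at `i ∈ A`. -/
noncomputable def ptensor {ι : Type*} [DecidableEq ι]
    (B : Finset ι) (i : ι) (x y : ι → ℝ) (j : ι) : ℝ :=
  if j ∈ B then x i * y j else (∑ l ∈ B, y l) * x j

/-!
Merging the players of `B` back into `i` turns a core element `z` of the composite game into a core
element of `β B • α`, and dividing by `β B` gives `x ∈ C(Γ_A)`. Since `x i ≥ α {i}` and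
`β {l} ≤ 0`, the composite bound `z l ≥ α {i} * β {l}` improves to `z l ≥ x i * β {l}`: the
restriction of `z` to `B` is an imputation of `x i • β`. Because `∑ l ∈ B, β {l} < β B`, this forces
`0 ≤ x i`, so `y` is obtained by dividing by `x i`, or is any imputation of `Γ_B` if `x i = 0`.
-/

section Scaling

variable {ι : Type*} {N : Finset ι} {v : Finset ι → ℝ} {z : ι → ℝ} {c : ℝ}

theorem InCore.singleton_le {j : ι} (hz : InCore N v z) (hj : j ∈ N) : v {j} ≤ z j := by
  simpa only [sum_singleton] using hz.2 {j} (singleton_subset_iff.mpr hj)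

theorem InCore.inv_smul (hc : 0 < c) (hz : InCore N (c • v) z) : InCore N v (c⁻¹ • z) := by
  simp only [InCore, Pi.smul_apply, smul_eq_mul, ← mul_sum] at hz ⊢
  exact ⟨by rw [hz.1, inv_mul_cancel_left₀ hc.ne'],
    fun S hS => (le_inv_mul_iff₀ hc).mpr (hz.2 S hS)⟩

theorem IsImputation.inv_smul (hc : 0 < c) (hz : IsImputation N (c • v) z) :
    IsImputation N v (c⁻¹ • z) := by
  simp only [IsImputation, Pi.smul_apply, smul_eq_mul, ← mul_sum] at hz ⊢
  exact ⟨by rw [hz.1, inv_mul_cancel_left₀ hc.ne'],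
    fun j hj => (le_inv_mul_iff₀ hc).mpr (hz.2 j hj)⟩

theorem IsImputation.eq_zero_of_zero_smul (hz : IsImputation N ((0 : ℝ) • v) z) :
    ∀ j ∈ N, z j = 0 := by
  simp only [IsImputation, zero_smul, Pi.zero_apply] at hz
  exact (sum_eq_zero_iff_of_nonneg hz.2).mp hz.1

theorem IsImputation.nonneg_of_smul (hv : ∑ j ∈ N, v {j} < v N)
    (hz : IsImputation N (c • v) z) : 0 ≤ c := by
  have surplus_nonneg : 0 ≤ c * (v N - ∑ j ∈ N, v {j}) := by
    rw [mul_sub, mul_sum, sub_nonneg]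
    exact (sum_le_sum hz.2).trans_eq hz.1
  exact nonneg_of_mul_nonneg_left surplus_nonneg (sub_pos.mpr hv)

theorem exists_isImputation (hN : N.Nonempty) (hv : ∑ j ∈ N, v {j} ≤ v N) :
    ∃ y : ι → ℝ, IsImputation N v y := by
  refine ⟨fun j => v {j} + (v N - ∑ k ∈ N, v {k}) / #N, ?_, fun j _ => ?_⟩
  · have card_ne_zero : (#N : ℝ) ≠ 0 := Nat.cast_ne_zero.mpr hN.card_ne_zero
    rw [sum_add_distrib, sum_const, nsmul_eq_mul, mul_div_cancel₀ _ card_ne_zero,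
      add_sub_cancel]
  · exact le_add_of_nonneg_right (div_nonneg (sub_nonneg.mpr hv) (Nat.cast_nonneg _))

theorem IsImputation.exists_eq_mul_of_smul (hN : N.Nonempty) (hv : ∑ j ∈ N, v {j} < v N)
    (hz : IsImputation N (c • v) z) :
    ∃ y : ι → ℝ, IsImputation N v y ∧ ∀ j ∈ N, z j = c * y j := by
  rcases (hz.nonneg_of_smul hv).eq_or_lt with rfl | hc
  · obtain ⟨y, hy⟩ := exists_isImputation hN hv.le
    exact ⟨y, hy, fun j hj => by rw [hz.eq_zero_of_zero_smul j hj, zero_mul]⟩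
  · exact ⟨c⁻¹ • z, hz.inv_smul hc, fun j _ => (mul_inv_cancel_left₀ hc.ne' (z j)).symm⟩

end Scaling

section Composition

variable {ι : Type*} [DecidableEq ι] {A B S : Finset ι} {α β : Finset ι → ℝ} {i : ι} {z : ι → ℝ}

theorem gameComp_of_subset_left (hAB : Disjoint A B) (hβ0 : β ∅ = 0) (hS : S ⊆ A) :
    gameComp A B i α β S = β B * α S := by
  rw [gameComp, inter_eq_left.mpr hS,
    disjoint_iff_inter_eq_empty.mp (hAB.mono_left hS), hβ0, mul_zero, add_zero]

theorem gameComp_union_right (hAB : Disjoint A B) (hS : S ⊆ A) (hiS : i ∉ S) :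
    gameComp A B i α β (S ∪ B) = β B * α (insert i S) := by
  have inter_left : (S ∪ B) ∩ A = S := by
    rw [union_inter_distrib_right, inter_eq_left.mpr hS,
      disjoint_iff_inter_eq_empty.mp hAB.symm, union_empty]
  rw [gameComp, gameDeriv, inter_left, union_inter_cancel_right, erase_eq_of_notMem hiS]
  ring

theorem gameComp_singleton_right (hAB : Disjoint A B) (hα0 : α ∅ = 0) {l : ι} (hl : l ∈ B) :
    gameComp A B i α β {l} = α {i} * β {l} := by
  rw [gameComp, gameDeriv, singleton_inter_of_notMem (disjoint_right.mp hAB hl),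
    singleton_inter_of_mem hl, insert_empty_eq, erase_empty, hα0, mul_zero, zero_add, sub_zero]

/-- The payoff vector in which player `i` receives everything that `z` assigns to the coalition `B`.
It carries payoffs of `Γ_A ∘ᵢ Γ_B` to payoffs of `Γ_A`, up to the factor `β B`. -/
noncomputable def mergePayoff (B : Finset ι) (i : ι) (z : ι → ℝ) : ι → ℝ :=
  Function.update z i (∑ l ∈ B, z l)

theorem mergePayoff_self : mergePayoff B i z i = ∑ l ∈ B, z l :=
  Function.update_self ..

theorem mergePayoff_of_ne {j : ι} (hj : j ≠ i) : mergePayoff B i z j = z j :=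
  Function.update_of_ne hj ..

theorem sum_mergePayoff_of_notMem (hiS : i ∉ S) :
    ∑ j ∈ S, mergePayoff B i z j = ∑ j ∈ S, z j :=
  sum_update_of_notMem hiS ..

theorem sum_insert_mergePayoff (hSB : Disjoint S B) (hiS : i ∉ S) :
    ∑ j ∈ insert i S, mergePayoff B i z j = ∑ j ∈ S ∪ B, z j := by
  rw [sum_insert hiS, sum_mergePayoff_of_notMem hiS, mergePayoff_self, sum_union hSB, add_comm]

theorem InCore.inCore_mergePayoff (hAB : Disjoint A B) (hβ0 : β ∅ = 0) (hi : i ∈ A)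
    (hz : InCore (A.erase i ∪ B) (gameComp A B i α β) z) :
    InCore A (β B • α) (mergePayoff B i z) := by
  have value_insert {S : Finset ι} (hS : S ⊆ A.erase i) :
      (β B • α) (insert i S) = gameComp A B i α β (S ∪ B) :=
    (gameComp_union_right hAB (hS.trans (erase_subset i A))
      fun hiS => notMem_erase i A (hS hiS)).symm
  have sum_merge_insert {S : Finset ι} (hS : S ⊆ A.erase i) :
      ∑ j ∈ insert i S, mergePayoff B i z j = ∑ j ∈ S ∪ B, z j :=
    sum_insert_mergePayoff (hAB.mono_left (hS.trans (erase_subset i A)))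
      fun hiS => notMem_erase i A (hS hiS)
  refine ⟨?_, fun S hS => ?_⟩
  · rw [← insert_erase hi, value_insert subset_rfl, sum_merge_insert subset_rfl, hz.1]
  · by_cases hiS : i ∈ S
    · have hS' : S.erase i ⊆ A.erase i := erase_subset_erase i hS
      rw [← insert_erase hiS, value_insert hS', sum_merge_insert hS']
      exact hz.2 _ (union_subset_union_left hS')
    · rw [sum_mergePayoff_of_notMem hiS, Pi.smul_apply, smul_eq_mul,
        ← gameComp_of_subset_left hAB hβ0 hS]
      exact hz.2 S ((subset_erase.mpr ⟨hS, hiS⟩).trans subset_union_left)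

theorem InCore.isImputation_right (hAB : Disjoint A B) (hα0 : α ∅ = 0)
    (hβl : ∀ l ∈ B, β {l} ≤ 0) {c : ℝ} (hc : α {i} ≤ c) (hcB : ∑ l ∈ B, z l = c * β B)
    (hz : InCore (A.erase i ∪ B) (gameComp A B i α β) z) :
    IsImputation B (c • β) z := by
  refine ⟨hcB, fun l hl => ?_⟩
  calc c * β {l} ≤ α {i} * β {l} := mul_le_mul_of_nonpos_right hc (hβl l hl)
    _ = gameComp A B i α β {l} := (gameComp_singleton_right hAB hα0 hl).symm
    _ ≤ z l := hz.singleton_le (mem_union_right _ hl)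

end Composition

theorem core_ptensor_decomposition_general {ι : Type*} [DecidableEq ι]
    (A B : Finset ι) (α β : Finset ι → ℝ)
    (hAB : Disjoint A B) (hα0 : α ∅ = 0) (hβ0 : β ∅ = 0)
    (i : ι) (hi : i ∈ A) (hβl : ∀ l ∈ B, β {l} ≤ 0) (hβB : 0 < β B)
    (z : ι → ℝ) (hz : InCore (A.erase i ∪ B) (gameComp A B i α β) z) :
    ∃ x y : ι → ℝ, InCore A α x ∧ IsImputation B β y ∧
      ∀ j ∈ A.erase i ∪ B, z j = ptensor B i x y j := by
  have hB : B.Nonempty := nonempty_iff_ne_empty.mpr fun h => hβB.ne' (h ▸ hβ0)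
  have mul_x (j : ι) : β B * ((β B)⁻¹ • mergePayoff B i z) j = mergePayoff B i z j :=
    mul_inv_cancel_left₀ hβB.ne' _
  set x : ι → ℝ := (β B)⁻¹ • mergePayoff B i z
  have hx : InCore A α x := (hz.inCore_mergePayoff hAB hβ0 hi).inv_smul hβB
  have sum_right : ∑ l ∈ B, z l = x i * β B := by rw [mul_comm, mul_x, mergePayoff_self]
  have hzB : IsImputation B (x i • β) z :=
    hz.isImputation_right hAB hα0 hβl (hx.singleton_le hi) sum_right
  obtain ⟨y, hy, hzy⟩ := hzB.exists_eq_mul_of_smul hB ((sum_nonpos hβl).trans_lt hβB)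
  refine ⟨x, y, hx, hy, fun j hj => ?_⟩
  rw [ptensor]
  split_ifs with hjB
  · exact hzy j hjB
  · have hji : j ≠ i := ne_of_mem_erase ((mem_union.mp hj).resolve_right hjB)
    rw [hy.1, mul_x, mergePayoff_of_ne hji]

/-- If `α({i}) = 0`, `β({l}) = 0` for all `l ∈ B` and `β(B) > 0`, then every core
element of the composite game decomposes as `x ⊗ᵢ y` with `x ∈ C(Γ_A)` and
`y ∈ I(Γ_B)`. -/
theorem core_ptensor_decomposition {ι : Type*} [DecidableEq ι]
    (A B : Finset ι) (α β : Finset ι → ℝ)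
    (hAB : Disjoint A B) (hα0 : α ∅ = 0) (hβ0 : β ∅ = 0)
    (hαnn : ∀ S ⊆ A, 0 ≤ α S) (hβnn : ∀ S ⊆ B, 0 ≤ β S)
    (i : ι) (hi : i ∈ A)
    (hαi : α {i} = 0) (hβl : ∀ l ∈ B, β {l} = 0) (hβB : 0 < β B) :
    ∀ z : ι → ℝ, InCore (A.erase i ∪ B) (gameComp A B i α β) z →
      ∃ x y : ι → ℝ, InCore A α x ∧ IsImputation B β y ∧
        ∀ j ∈ A.erase i ∪ B, z j = ptensor B i x y j := by
  exact core_ptensor_decomposition_general A B α β hAB hα0 hβ0 i hi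
    (fun l hl => (hβl l hl).le) hβB
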